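/- arXiv:2207.13672 — 6 statements merged into one kernel-verified Lean document; each statement's English description precedes it below -/
import Mathlib

section
/- If two proper metric spaces (X,d_X) and (Y,d_Y) are both integrally (k,k)-quasi-geodesic for some k ≥ 1, then their cartesian product X × Y equipped with the ℓ₁-metric d₁((x₁,y₁),(x₂,y₂)) = d_X(x₁,x₂) + d_Y(y₁,y₂) is integrally (2k,2k)-quasi-geodesic; consequently X × Y equipped with the ℓ₂-metric d₂((x₁,y₁),(x₂,y₂)) = √(d_X(x₁,x₂)² + d_Y(y₁,y₂)²) is integrally quasi-geodesic. -/
open Filter Metric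

/-- `g` is an integral `(q,Q)`-quasi-geodesic on the index set `s ⊆ ℕ`:
`|x − y|/q − Q ≤ d(g x, g y) ≤ q·|x − y| + Q` for all `x, y ∈ s`. -/
def IsQGOn {X : Type*} [MetricSpace X] (q Q : ℝ) (g : ℕ → X) (s : Set ℕ) : Prop :=
  ∀ x ∈ s, ∀ y ∈ s,
    |(x : ℝ) - (y : ℝ)| / q - Q ≤ dist (g x) (g y) ∧
    dist (g x) (g y) ≤ q * |(x : ℝ) - (y : ℝ)| + Q

/-- An integral `(q,Q)`-quasi-geodesic ray: domain all positive integers. -/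
def IsQGRay {X : Type*} [MetricSpace X] (q Q : ℝ) (g : ℕ → X) : Prop :=
  IsQGOn q Q g {i | 1 ≤ i}

/-- The `m`-cone `C_X(x₀,q,Q,g,m)`: all `x ∈ X` reachable as `h i`, `i ≥ m`, by an
integral `(q,Q)`-quasi-geodesic `h` starting at `x₀` and agreeing with `g` for indices `≤ m`. -/
def Cone {X : Type*} [MetricSpace X] (x₀ : X) (q Q : ℝ) (g : ℕ → X) (m : ℕ) : Set X :=
  {x | ∃ (h : ℕ → X) (n i : ℕ), IsQGOn q Q h (Set.Icc 1 n) ∧ h 1 = x₀ ∧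
      (∀ j, 1 ≤ j → j ≤ m → h j = g j) ∧ m ≤ i ∧ i ≤ n ∧ h i = x}

/-- `f` is slowly-oscillating: whenever `d(x₀,xₙ) → ∞` and `d(xₙ,yₙ) < M` for all `n ≥ 1`,
then `d(f xₙ, f yₙ) → 0`. -/
def SlowlyOscillating {X E : Type*} [MetricSpace X] [PseudoMetricSpace E] (f : X → E) : Prop :=
  ∀ (x₀ : X) (x y : ℕ → X),
    Tendsto (fun n => dist x₀ (x n)) atTop atTop →
    (∃ M > (0 : ℝ), ∀ n, 1 ≤ n → dist (x n) (y n) < M) →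
    Tendsto (fun n => dist (f (x n)) (f (y n))) atTop (nhds 0)

/-- `f` is geometrically slowly-oscillating: bounded, continuous, slowly-oscillating, and
for every `ε > 0`, `k ≥ 1`, `x₀` and integral `(k,k)`-quasi-geodesic ray `g` at `x₀`
there is `m ≥ 1` with `diam (f '' C_X(x₀,k,k,g,m)) < ε`. -/
def GeomSO {X E : Type*} [MetricSpace X] [PseudoMetricSpace E] (f : X → E) : Prop :=
  Bornology.IsBounded (Set.range f) ∧ Continuous f ∧ SlowlyOscillating f ∧
    ∀ ε > (0 : ℝ), ∀ k : ℝ, 1 ≤ k → ∀ (x₀ : X) (g : ℕ → X),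
      IsQGRay k k g → g 1 = x₀ →
      ∃ m : ℕ, 1 ≤ m ∧ Metric.diam (f '' Cone x₀ k k g m) < ε

/-- Every bounded subset of `X` can be covered by finitely many sets of diameter less than `M`. -/
def CoverM (X : Type*) [MetricSpace X] (M : ℝ) : Prop :=
  ∀ B : Set X, Bornology.IsBounded B →
    ∃ S : Finset (Set X), (∀ s ∈ S, Metric.diam s < M) ∧ B ⊆ ⋃ s ∈ S, (s : Set X)

/-- `X` is integrally `(q,Q)`-quasi-geodesic: every two points are joined by a finite
integral `(q,Q)`-quasi-geodesic. -/
def IntegrallyQGWith (X : Type*) [MetricSpace X] (q Q : ℝ) : Prop :=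
  ∀ x y : X, ∃ (g : ℕ → X) (n : ℕ), 1 ≤ n ∧ IsQGOn q Q g (Set.Icc 1 n) ∧ g 1 = x ∧ g n = y

/-- The Gromov product `⟨x,y⟩_a = (d(x,a) + d(y,a) − d(x,y))/2`. -/
noncomputable def gromovProd {X : Type*} [MetricSpace X] (a x y : X) : ℝ :=
  (dist x a + dist y a - dist x y) / 2

/-- `X` is a geodesic space: any two points are joined by a geodesic segment. -/
def IsGeodesicSpace (X : Type*) [MetricSpace X] : Prop :=
  ∀ x y : X, ∃ γ : ℝ → X, γ 0 = x ∧ γ (dist x y) = y ∧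
    ∀ s ∈ Set.Icc (0 : ℝ) (dist x y), ∀ t ∈ Set.Icc (0 : ℝ) (dist x y),
      dist (γ s) (γ t) = |s - t|

/-!
A quasi-geodesic in the `ℓ₁`-product is obtained by first moving along a quasi-geodesic of `X` and
then along one of `Y`: clamping the indices to either leg splits `|i - j|` exactly into the index
distances travelled on the two legs, so the estimates of the factors add up. Every `ℓ_p`-metric on
the product is bi-Lipschitz equivalent to the `ℓ₁`-metric, because both are to the `ℓ_∞`-metric, and
a bi-Lipschitz bijection carries quasi-geodesics to quasi-geodesics.
-/

open scoped ENNReal NNReal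

section

variable {X Y : Type*} [MetricSpace X] [MetricSpace Y] {q r Q R : ℝ}

namespace IsQGOn

variable {g : ℕ → X} {s : Set ℕ}

theorem nonneg_of_mem (hg : IsQGOn q Q g s) {i : ℕ} (hi : i ∈ s) : 0 ≤ Q := by
  simpa using (hg i hi i hi).1

theorem mono (hg : IsQGOn q Q g s) (hq : 0 < q) (hqr : q ≤ r) (hQR : Q ≤ R) :
    IsQGOn r R g s := by
  intro i hi j hj
  obtain ⟨lower, upper⟩ := hg i hi j hj
  constructor
  · calc |(i : ℝ) - j| / r - R ≤ |(i : ℝ) - j| / q - Q := by gcongr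
      _ ≤ dist (g i) (g j) := lower
  · calc dist (g i) (g j) ≤ q * |(i : ℝ) - j| + Q := upper
      _ ≤ r * |(i : ℝ) - j| + R := by gcongr

theorem comp_biLipschitz {K : ℝ≥0} {f : X → Y} (hg : IsQGOn q Q g s) (hK : 1 ≤ K)
    (hlip : LipschitzWith K f) (hanti : AntilipschitzWith K f) :
    IsQGOn (K * q) (K * Q) (f ∘ g) s := by
  intro i hi j hj
  obtain ⟨lower, upper⟩ := hg i hi j hj
  have hQ : 0 ≤ Q := hg.nonneg_of_mem hi
  have hK' : (1 : ℝ) ≤ K := mod_cast hK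
  constructor
  · calc |(i : ℝ) - j| / (K * q) - K * Q ≤ |(i : ℝ) - j| / (K * q) - Q / K := by
          gcongr
          exact (div_le_self hQ hK').trans (le_mul_of_one_le_left hQ hK')
      _ = (|(i : ℝ) - j| / q - Q) / K := by rw [sub_div, div_div, mul_comm q]
      _ ≤ dist (g i) (g j) / K := by gcongr
      _ ≤ dist (f (g i)) (f (g j)) := by
          rw [div_le_iff₀' (by positivity)]
          exact hanti.le_mul_dist (g i) (g j)
  · calc dist (f (g i)) (f (g j)) ≤ K * dist (g i) (g j) := hlip.dist_le_mul (g i) (g j)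
      _ ≤ K * (q * |(i : ℝ) - j| + Q) := by gcongr
      _ = K * q * |(i : ℝ) - j| + K * Q := by ring

end IsQGOn

/-- The path in the `ℓ₁`-product that follows `g` on the indices `1, …, n` while the second
coordinate rests at `h 1`, and from index `n` on follows `h` while the first coordinate rests at
`g n`. The truncated subtraction `i - n` is what keeps the second coordinate at rest for `i ≤ n`. -/
def staircase (n : ℕ) (g : ℕ → X) (h : ℕ → Y) (i : ℕ) : WithLp 1 (X × Y) :=
  WithLp.toLp 1 (g (min i n), h (i - n + 1))

theorem dist_withLp_one_prod (x y : WithLp 1 (X × Y)) :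
    dist x y = dist x.fst y.fst + dist x.snd y.snd := by
  simp [WithLp.prod_dist_eq_add (p := 1) (by simp)]

theorem abs_natCast_sub_eq_abs_min_add_abs_tsub (i j n : ℕ) :
    |(i : ℝ) - j| =
      |((min i n : ℕ) : ℝ) - (min j n : ℕ)| + |((i - n + 1 : ℕ) : ℝ) - (j - n + 1 : ℕ)| := by
  have cast_tsub_succ (a : ℕ) : ((a - n + 1 : ℕ) : ℝ) = max (a : ℝ) n - n + 1 := by
    rw [eq_comm, ← Nat.cast_max, ← tsub_add_eq_max]
    push_cast
    ring
  rw [cast_tsub_succ, cast_tsub_succ, add_sub_add_right_eq_sub, sub_sub_sub_cancel_right,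
    Nat.cast_min, Nat.cast_min, add_comm]
  exact (abs_sub_sup_add_abs_sub_inf (i : ℝ) j n).symm

theorem IsQGOn.staircase {g : ℕ → X} {h : ℕ → Y} {n m : ℕ} (hn : 1 ≤ n) (hm : 1 ≤ m)
    (hg : IsQGOn q Q g (Set.Icc 1 n)) (hh : IsQGOn q R h (Set.Icc 1 m)) :
    IsQGOn q (Q + R) (staircase n g h) (Set.Icc 1 (n + m - 1)) := by
  have fst_mem {i : ℕ} (hi : i ∈ Set.Icc 1 (n + m - 1)) : min i n ∈ Set.Icc 1 n :=
    ⟨le_min hi.1 hn, min_le_right i n⟩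
  have snd_mem {i : ℕ} (hi : i ∈ Set.Icc 1 (n + m - 1)) : i - n + 1 ∈ Set.Icc 1 m :=
    ⟨by omega, by have := hi.2; omega⟩
  intro i hi j hj
  obtain ⟨lowerX, upperX⟩ := hg _ (fst_mem hi) _ (fst_mem hj)
  obtain ⟨lowerY, upperY⟩ := hh _ (snd_mem hi) _ (snd_mem hj)
  rw [dist_withLp_one_prod, abs_natCast_sub_eq_abs_min_add_abs_tsub i j n, add_div, mul_add]
  simp only [_root_.staircase, WithLp.toLp_fst, WithLp.toLp_snd]
  constructor <;> linarith

theorem two_rpow_toReal_one_div_le_two (p : ℝ≥0∞) [hp : Fact (1 ≤ p)] :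
    (2 : ℝ≥0) ^ (1 / p).toReal ≤ 2 := by
  have exponent_le_one : (1 / p).toReal ≤ 1 := by
    rw [one_div]
    exact ENNReal.toReal_mono ENNReal.one_ne_top (ENNReal.inv_le_one.2 hp.out)
  simpa using NNReal.rpow_le_rpow_of_exponent_le one_le_two exponent_le_one

theorem lipschitzWith_toLp_comp_ofLp (p p' : ℝ≥0∞) [Fact (1 ≤ p)] [Fact (1 ≤ p')] :
    LipschitzWith 2 (WithLp.toLp p' ∘ WithLp.ofLp : WithLp p (X × Y) → WithLp p' (X × Y)) := by
  have hcomp := (WithLp.prod_lipschitzWith_toLp p' X Y).comp (WithLp.prod_lipschitzWith_ofLp p X Y)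
  rw [mul_one] at hcomp
  exact hcomp.weaken (two_rpow_toReal_one_div_le_two p')

theorem antilipschitzWith_toLp_comp_ofLp (p p' : ℝ≥0∞) [Fact (1 ≤ p)] [Fact (1 ≤ p')] :
    AntilipschitzWith 2 (WithLp.toLp p' ∘ WithLp.ofLp : WithLp p (X × Y) → WithLp p' (X × Y)) :=
  (lipschitzWith_toLp_comp_ofLp p' p).to_rightInverse fun _ => rfl

namespace IntegrallyQGWith

theorem mono (hX : IntegrallyQGWith X q Q) (hq : 0 < q) (hqr : q ≤ r) (hQR : Q ≤ R) :
    IntegrallyQGWith X r R := by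
  intro x y
  obtain ⟨g, n, hn, hg, hg_first, hg_last⟩ := hX x y
  exact ⟨g, n, hn, hg.mono hq hqr hQR, hg_first, hg_last⟩

theorem of_surjective_biLipschitz {K : ℝ≥0} {f : X → Y} (hX : IntegrallyQGWith X q Q) (hK : 1 ≤ K)
    (hsurj : f.Surjective) (hlip : LipschitzWith K f) (hanti : AntilipschitzWith K f) :
    IntegrallyQGWith Y (K * q) (K * Q) := by
  refine hsurj.forall₂.2 fun x y => ?_
  obtain ⟨g, n, hn, hg, rfl, rfl⟩ := hX x y
  exact ⟨f ∘ g, n, hn, hg.comp_biLipschitz hK hlip hanti, rfl, rfl⟩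

theorem withLp_one_prod (hX : IntegrallyQGWith X q Q) (hY : IntegrallyQGWith Y q R) :
    IntegrallyQGWith (WithLp 1 (X × Y)) q (Q + R) := by
  rintro ⟨x, y⟩ ⟨x', y'⟩
  obtain ⟨g, n, hn, hg, rfl, rfl⟩ := hX x x'
  obtain ⟨h, m, hm, hh, rfl, rfl⟩ := hY y y'
  refine ⟨staircase n g h, n + m - 1, by omega, hg.staircase hn hm hh, ?_, ?_⟩
  · have first_leg : min 1 n = 1 := min_eq_left hn
    have at_rest : 1 - n + 1 = 1 := by omega
    simp only [staircase, first_leg, at_rest]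
  · have at_rest : min (n + m - 1) n = n := by omega
    have last_leg : n + m - 1 - n + 1 = m := by omega
    simp only [staircase, at_rest, last_leg]

theorem withLp_prod (p : ℝ≥0∞) [Fact (1 ≤ p)] (hX : IntegrallyQGWith X q Q)
    (hY : IntegrallyQGWith Y q R) :
    IntegrallyQGWith (WithLp p (X × Y)) (2 * q) (2 * (Q + R)) :=
  (hX.withLp_one_prod hY).of_surjective_biLipschitz (K := 2) one_le_two
    ((WithLp.toLp_surjective p).comp (WithLp.ofLp_surjective 1))
    (lipschitzWith_toLp_comp_ofLp 1 p) (antilipschitzWith_toLp_comp_ofLp 1 p)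

end IntegrallyQGWith

end

theorem stmt_1_general {X Y : Type*} [MetricSpace X] [MetricSpace Y] {q r Q R : ℝ}
    (hq : 0 < q) (hr : 0 < r)
    (hX : IntegrallyQGWith X q Q) (hY : IntegrallyQGWith Y r R) :
    IntegrallyQGWith (WithLp 1 (X × Y)) (max q r) (Q + R) ∧
      ∀ (p : ℝ≥0∞) [Fact (1 ≤ p)],
        IntegrallyQGWith (WithLp p (X × Y)) (2 * max q r) (2 * (Q + R)) := by
  have hX' : IntegrallyQGWith X (max q r) Q := hX.mono hq (le_max_left q r) le_rfl
  have hY' : IntegrallyQGWith Y (max q r) R := hY.mono hr (le_max_right q r) le_rfl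
  exact ⟨hX'.withLp_one_prod hY', fun p _ => hX'.withLp_prod p hY'⟩

/-- Proposition 2.7: the product of two proper integrally (k,k)-quasi-geodesic spaces is
integrally (2k,2k)-quasi-geodesic in the ℓ₁-metric, hence integrally quasi-geodesic in
the ℓ₂-metric. -/
theorem stmt_1 {X Y : Type*} [MetricSpace X] [MetricSpace Y]
    [ProperSpace X] [ProperSpace Y] (k : ℝ) (hk : 1 ≤ k)
    (hX : IntegrallyQGWith X k k) (hY : IntegrallyQGWith Y k k) :
    IntegrallyQGWith (WithLp 1 (X × Y)) (2 * k) (2 * k) ∧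
      ∃ q Q : ℝ, 1 ≤ q ∧ 0 ≤ Q ∧ IntegrallyQGWith (WithLp 2 (X × Y)) q Q := by
  obtain ⟨hℓ₁, hℓp⟩ := stmt_1_general (by positivity) (by positivity) hX hY
  rw [max_self, ← two_mul] at hℓ₁
  exact ⟨hℓ₁.mono (by positivity) (by linarith) le_rfl,
    _, _, by linarith [le_max_left k k], by positivity, hℓp 2⟩
end

section
/- Suppose X is a metric space and U is a coarsely clopen subset of X. Then any bounded continuous function f : X → ℂ for which there is a bounded subset B of X such that both the restriction of f to U ∖ B and the restriction of f to (X ∖ U) ∖ B are constant is geometrically slowly-oscillating. -/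
open Filter Metric

/-- U is coarsely clopen in X. -/
def CoarselyClopen {X : Type*} [MetricSpace X] (U : Set X) : Prop :=
  ∀ r > (0 : ℝ), ∃ B : Set X, Bornology.IsBounded B ∧
    ∀ x ∈ U \ B, ∀ y ∈ Uᶜ \ B, dist x y > r

/-!
Far from a base point, points within a fixed distance `r` of each other lie on the same side of a
coarsely clopen set `U`, so a function that is constant on each side outside a bounded set takes
equal values at them. This makes `f` slowly oscillating. Consecutive points of a
`(q, Q)`-quasi-geodesic are at distance at most `q + Q`, and the quasi-geodesics starting at `x₀`
escape to infinity at a uniform linear rate, so along all of them `f` is constant from a common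
index `m` on. Those forming the `m`-cone of `g` agree at `m`, hence `f` is constant on the cone.
-/

section

open Bornology

/-- `f` is coarsely locally constant: for each scale `r`, it is constant on every closed ball of
radius `r` whose centre lies outside some bounded set. It isolates what the hypotheses on `U` and
`f` contribute to geometric slow oscillation. The bounded set is encoded by the filter
`cobounded X`, and `r` ranges over all reals since nonpositive scales impose nothing. -/
def CoarselyLocallyConstant {X E : Type*} [MetricSpace X] (f : X → E) : Prop :=
  ∀ r : ℝ, ∀ᶠ x in cobounded X, ∀ y, dist x y ≤ r → f x = f y

theorem eventually_cobounded_forall_dist_le {X : Type*} [PseudoMetricSpace X] {p : X → Prop}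
    (hp : ∀ᶠ x in cobounded X, p x) (r : ℝ) :
    ∀ᶠ x in cobounded X, ∀ y, dist x y ≤ r → p y := by
  have hbdd : IsBounded (cthickening r {x | p x}ᶜ) :=
    (isCobounded_def.2 hp).compl.cthickening
  filter_upwards [isBounded_def.1 hbdd] with x hx y hxy
  by_contra hy
  exact hx (mem_cthickening_of_dist_le x y r _ hy hxy)

variable {X E : Type*} [MetricSpace X]

namespace CoarselyClopen

variable {U : Set X}

theorem eventually_mem_iff_mem (hU : CoarselyClopen U) (r : ℝ) :
    ∀ᶠ x in cobounded X, ∀ y, dist x y ≤ r → (x ∈ U ↔ y ∈ U) := by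
  obtain ⟨B, hB, hsep⟩ := hU (max r 1) (by positivity)
  have hfar : ∀ᶠ x in cobounded X, x ∉ B := isBounded_def.1 hB
  filter_upwards [hfar, eventually_cobounded_forall_dist_le hfar r] with x hxB hnear y hxy
  have hyB := hnear y hxy
  have hle : dist x y ≤ max r 1 := hxy.trans (le_max_left r 1)
  constructor
  · intro hxU
    by_contra hyU
    exact (hsep x ⟨hxU, hxB⟩ y ⟨hyU, hyB⟩).not_ge hle
  · intro hyU
    by_contra hxU
    exact (hsep y ⟨hyU, hyB⟩ x ⟨hxU, hxB⟩).not_ge (dist_comm x y ▸ hle)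

theorem coarselyLocallyConstant (hU : CoarselyClopen U) {f : X → E} {B : Set X}
    (hB : IsBounded B) (hfU : ∀ x ∈ U \ B, ∀ y ∈ U \ B, f x = f y)
    (hfUc : ∀ x ∈ Uᶜ \ B, ∀ y ∈ Uᶜ \ B, f x = f y) : CoarselyLocallyConstant f := by
  intro r
  have hfar : ∀ᶠ x in cobounded X, x ∉ B := isBounded_def.1 hB
  filter_upwards [hfar, eventually_cobounded_forall_dist_le hfar r, hU.eventually_mem_iff_mem r]
    with x hxB hnear hside y hxy
  by_cases hxU : x ∈ U
  · exact hfU x ⟨hxU, hxB⟩ y ⟨(hside y hxy).1 hxU, hnear y hxy⟩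
  · exact hfUc x ⟨hxU, hxB⟩ y ⟨mt (hside y hxy).2 hxU, hnear y hxy⟩

end CoarselyClopen

theorem IsQGOn.dist_succ_le {q Q : ℝ} {h : ℕ → X} {s : Set ℕ} (hh : IsQGOn q Q h s)
    {i : ℕ} (hi : i ∈ s) (hi' : i + 1 ∈ s) : dist (h i) (h (i + 1)) ≤ q + Q := by
  simpa using (hh i hi (i + 1) hi').2

theorem eventually_forall_isQGOn {q Q : ℝ} (hq : 0 < q) (a : ℕ) (x₀ : X) {p : X → Prop}
    (hp : ∀ᶠ x in cobounded X, p x) :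
    ∀ᶠ i in atTop, ∀ (h : ℕ → X) (s : Set ℕ),
      IsQGOn q Q h s → a ∈ s → h a = x₀ → i ∈ s → p (h i) := by
  rw [← comap_dist_left_atTop x₀] at hp
  obtain ⟨R, hR⟩ := eventually_atTop.1 (eventually_comap.1 hp)
  have hlower : Tendsto (fun i : ℕ ↦ ((i : ℝ) - a) / q - Q) atTop atTop :=
    tendsto_atTop_add_const_right _ _
      ((tendsto_atTop_add_const_right _ _ tendsto_natCast_atTop_atTop).atTop_div_const hq)
  filter_upwards [hlower.eventually_ge_atTop R] with i hi h s hh ha h_start his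
  refine hR (dist x₀ (h i)) ?_ (h i) rfl
  calc R ≤ ((i : ℝ) - a) / q - Q := hi
    _ ≤ |(a : ℝ) - i| / q - Q := by
      rw [abs_sub_comm]
      gcongr
      exact le_abs_self _
    _ ≤ dist x₀ (h i) := h_start ▸ (hh a ha i his).1

namespace CoarselyLocallyConstant

variable {f : X → E}

theorem slowlyOscillating [PseudoMetricSpace E] (hf : CoarselyLocallyConstant f) :
    SlowlyOscillating f := by
  rintro x₀ x y hx ⟨M, -, hxy⟩
  have hx_cobounded : Tendsto x atTop (cobounded X) := (tendsto_dist_left_atTop_iff x₀).1 hx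
  refine tendsto_const_nhds.congr' ?_
  filter_upwards [hx_cobounded.eventually (hf M), eventually_ge_atTop 1] with n hn hn1
  rw [hn (y n) (hxy n hn1).le, dist_self]

theorem eventually_eq_on_cone (hf : CoarselyLocallyConstant f) {q : ℝ} (hq : 0 < q) (Q : ℝ)
    (x₀ : X) (g : ℕ → X) : ∀ᶠ m in atTop, ∀ x ∈ Cone x₀ q Q g m, f x = f (g m) := by
  have hstep := eventually_forall_ge_atTop.2
    (eventually_forall_isQGOn (Q := Q) hq 1 x₀ (hf (q + Q)))
  filter_upwards [hstep, eventually_ge_atTop 1] with m hstep hm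
  rintro _ ⟨h, n, i, hh, h_start, hagree, hmi, hin, rfl⟩
  induction i, hmi using Nat.le_induction with
  | base => rw [hagree m hm le_rfl]
  | succ j hmj ih =>
    have h1 : 1 ∈ Set.Icc 1 n := ⟨le_rfl, by lia⟩
    have hj : j ∈ Set.Icc 1 n := ⟨by lia, by lia⟩
    have hj_succ : j + 1 ∈ Set.Icc 1 n := ⟨by lia, hin⟩
    calc f (h (j + 1)) = f (h j) :=
          (hstep j hmj h _ hh h1 h_start hj _ (hh.dist_succ_le hj hj_succ)).symm
      _ = f (g m) := ih (by lia)

theorem geomSO [PseudoMetricSpace E] (hf : CoarselyLocallyConstant f)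
    (hb : IsBounded (Set.range f)) (hc : Continuous f) : GeomSO f := by
  refine ⟨hb, hc, hf.slowlyOscillating, fun ε hε k hk x₀ g _ _ ↦ ?_⟩
  obtain ⟨m, hcone, hm⟩ :=
    ((hf.eventually_eq_on_cone (by linarith) k x₀ g).and (eventually_ge_atTop 1)).exists
  have himage : (f '' Cone x₀ k k g m).Subsingleton := by
    rintro _ ⟨x, hx, rfl⟩ _ ⟨y, hy, rfl⟩
    rw [hcone x hx, hcone y hy]
  exact ⟨m, hm, (diam_subsingleton himage).trans_lt hε⟩

end CoarselyLocallyConstant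

theorem stmt_3_general [PseudoMetricSpace E] (U : Set X) (hU : CoarselyClopen U)
    (f : X → E) (hb : IsBounded (Set.range f)) (hc : Continuous f)
    (hconst : ∃ B : Set X, IsBounded B ∧
      (∀ x ∈ U \ B, ∀ y ∈ U \ B, f x = f y) ∧
      (∀ x ∈ Uᶜ \ B, ∀ y ∈ Uᶜ \ B, f x = f y)) :
    GeomSO f := by
  obtain ⟨B, hB, hfU, hfUc⟩ := hconst
  exact (hU.coarselyLocallyConstant hB hfU hfUc).geomSO hb hc

end

/-- Example 3.3: a bounded continuous function eventually constant on a coarsely clopen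
set and on its complement is geometrically slowly oscillating. -/
theorem stmt_3 {X : Type*} [MetricSpace X] (U : Set X) (hU : CoarselyClopen U)
    (f : X → ℂ) (hb : Bornology.IsBounded (Set.range f)) (hc : Continuous f)
    (hconst : ∃ B : Set X, Bornology.IsBounded B ∧
      (∀ x ∈ U \ B, ∀ y ∈ U \ B, f x = f y) ∧
      (∀ x ∈ Uᶜ \ B, ∀ y ∈ Uᶜ \ B, f x = f y)) :
    GeomSO f :=
  stmt_3_general U hU f hb hc hconst
end

section
/- Let f : X → ℂ be a geometrically slowly-oscillating function on a metric space X, let k ≥ 1, and let gₙ be a sequence of integral (k,k)-quasi-geodesic rays in X boundedly approaching an integral quasi-geodesic ray g. Then f(gₙ) → f(g), where for an integral quasi-geodesic ray h, f(h) denotes the limit of the Cauchy sequence (f(h(i)))_{i ≥ 1}. Moreover, if instead the gₙ are finite integral (k,k)-quasi-geodesics with endpoints yₙ boundedly approaching g, then f(yₙ) → f(g). -/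
open Filter Metric

/-!
Let the quasi-geodesic ray `g` be followed up to index `m`, within distance `C`, by a quasi-geodesic
`h`. Replacing the initial segment of `h` by that of `g` costs only `C` in the additive constant, so
every later point of `h` lies in the `m`-cone of `g` for one choice of constants independent of `h`
and `m`. The tail of `g` lies in the same cone, on which `f` hardly varies once `m` is large; hence
`f` at the later points of `h` is close to the limit of `f` along `g`, uniformly in `h`.
-/

section QuasiGeodesic

variable {X : Type*} [MetricSpace X] {q Q q' Q' C : ℝ} {g h : ℕ → X} {s t : Set ℕ} {m i : ℕ}

theorem IsQGOn.mono_set (hg : IsQGOn q Q g t) (hst : s ⊆ t) : IsQGOn q Q g s :=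
  fun x hx y hy => hg x (hst hx) y (hst hy)

theorem IsQGOn.mono_const (hg : IsQGOn q Q g s) (hq : 0 < q) (hqq' : q ≤ q') (hQQ' : Q ≤ Q') :
    IsQGOn q' Q' g s := fun x hx y hy =>
  ⟨calc |(x : ℝ) - y| / q' - Q' ≤ |(x : ℝ) - y| / q - Q := by gcongr
      _ ≤ dist (g x) (g y) := (hg x hx y hy).1,
    calc dist (g x) (g y) ≤ q * |(x : ℝ) - y| + Q := (hg x hx y hy).2
      _ ≤ q' * |(x : ℝ) - y| + Q' := by gcongr⟩

theorem IsQGRay.isQGOn_Icc (hg : IsQGRay q Q g) (n : ℕ) : IsQGOn q Q g (Set.Icc 1 n) :=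
  IsQGOn.mono_set hg fun _ hx => hx.1

theorem IsQGOn.piecewise [DecidablePred (· ∈ t)] (hg : IsQGOn q Q g (s ∩ t)) (hh : IsQGOn q Q h s)
    (hC : 0 ≤ C) (hgh : ∀ j ∈ s ∩ t, dist (g j) (h j) ≤ C) :
    IsQGOn q (Q + C) (t.piecewise g h) s := by
  have mixed : ∀ x ∈ s ∩ t, ∀ y ∈ s,
      |(x : ℝ) - y| / q - (Q + C) ≤ dist (g x) (h y) ∧
        dist (g x) (h y) ≤ q * |(x : ℝ) - y| + (Q + C) := by
    intro x hx y hy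
    have hxy := hh x hx.1 y hy
    have hclose := hgh x hx
    have hlower := dist_triangle_left (h x) (h y) (g x)
    have hupper := dist_triangle (g x) (h x) (h y)
    constructor <;> linarith
  intro x hx y hy
  by_cases hxt : x ∈ t <;> by_cases hyt : y ∈ t <;>
    simp only [Set.piecewise, hxt, hyt, if_true, if_false]
  · have hxy := hg x ⟨hx, hxt⟩ y ⟨hy, hyt⟩
    constructor <;> linarith
  · exact mixed x ⟨hx, hxt⟩ y hy
  · rw [dist_comm, abs_sub_comm]
    exact mixed y ⟨hy, hyt⟩ x hx
  · have hxy := hh x hx y hy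
    constructor <;> linarith

theorem IsQGRay.mem_cone_self (hg : IsQGRay q Q g) (hmi : m ≤ i) : g i ∈ Cone (g 1) q Q g m :=
  ⟨g, i, i, hg.isQGOn_Icc i, rfl, fun _ _ _ => rfl, hmi, le_rfl, rfl⟩

theorem IsQGOn.mem_cone_of_forall_dist_le (hg : IsQGOn q Q g (Set.Icc 1 m))
    (hh : IsQGOn q Q h (Set.Icc 1 i)) (hm : 1 ≤ m) (hmi : m < i) (hC : 0 ≤ C)
    (hgh : ∀ j, 1 ≤ j → j ≤ m → dist (h j) (g j) ≤ C) :
    h i ∈ Cone (g 1) q (Q + C) g m := by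
  refine ⟨(Set.Iic m).piecewise g h, i, i, ?_, ?_, ?_, hmi.le, le_rfl, ?_⟩
  · refine (hg.mono_set fun j hj => ⟨hj.1.1, hj.2⟩).piecewise hh hC fun j hj => ?_
    rw [dist_comm]
    exact hgh j hj.1.1 hj.2
  · exact Set.piecewise_eq_of_mem _ _ _ hm
  · exact fun j _ hj => Set.piecewise_eq_of_mem _ _ _ hj
  · exact Set.piecewise_eq_of_notMem _ _ _ (Set.notMem_Iic.mpr hmi)

end QuasiGeodesic

/-- `f` is Cauchy along cones: its oscillation on the `m`-cone of any quasi-geodesic ray tends to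
`0` as `m` grows. This is the cone condition in `GeomSO`, with pointwise distances in place of
`Metric.diam`, which is `0` on unbounded sets. -/
def ConeCauchy {X E : Type*} [MetricSpace X] [PseudoMetricSpace E] (f : X → E) : Prop :=
  ∀ ε > (0 : ℝ), ∀ k : ℝ, 1 ≤ k → ∀ g : ℕ → X, IsQGRay k k g →
    ∃ m : ℕ, 1 ≤ m ∧ ∀ x ∈ Cone (g 1) k k g m, ∀ y ∈ Cone (g 1) k k g m, dist (f x) (f y) < ε

/-- The sequences `gs n` boundedly approach `g` along the filter `l`: some constant `C` bounds their
distance to `g` on every initial segment `1, …, m`, for all `n` sufficiently far along `l`.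
Divergence of the lengths of the `gs n` is not included. -/
def BoundedlyApproaches {X ι : Type*} [MetricSpace X] (l : Filter ι) (gs : ι → ℕ → X)
    (g : ℕ → X) : Prop :=
  ∃ C > (0 : ℝ), ∀ m, 1 ≤ m → ∀ᶠ n in l, ∀ i, 1 ≤ i → i ≤ m → dist (gs n i) (g i) < C

theorem boundedlyApproaches_atTop {X ι : Type*} [MetricSpace X] [Preorder ι] [IsDirectedOrder ι]
    [Nonempty ι] {gs : ι → ℕ → X} {g : ℕ → X} :
    BoundedlyApproaches atTop gs g ↔
      ∃ C > (0 : ℝ), ∀ m, 1 ≤ m → ∃ N, ∀ n, N ≤ n → ∀ i, 1 ≤ i → i ≤ m →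
        dist (gs n i) (g i) < C := by
  simp only [BoundedlyApproaches, eventually_atTop]

section Limits

variable {X E ι : Type*} [MetricSpace X] [PseudoMetricSpace E] {f : X → E} {g : ℕ → X} {L : E}
  {q Q k K C ε : ℝ} {l : Filter ι} {gs : ι → ℕ → X}

theorem GeomSO.coneCauchy (hf : GeomSO f) : ConeCauchy f := by
  obtain ⟨hbounded, -, -, hcone⟩ := hf
  intro ε hε k hk g hg
  obtain ⟨m, hm, hdiam⟩ := hcone ε hε k hk (g 1) g hg rfl
  have hbounded_cone := hbounded.subset (Set.image_subset_range f (Cone (g 1) k k g m))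
  exact ⟨m, hm, fun x hx y hy => (dist_le_diam_of_mem hbounded_cone (Set.mem_image_of_mem f hx)
    (Set.mem_image_of_mem f hy)).trans_lt hdiam⟩

theorem ConeCauchy.exists_forall_mem_cone_dist_le (hf : ConeCauchy f) (hk : 1 ≤ k)
    (hg : IsQGRay k k g) (hL : Tendsto (fun i => f (g i)) atTop (nhds L)) (hε : 0 < ε) :
    ∃ m : ℕ, 1 ≤ m ∧ ∀ x ∈ Cone (g 1) k k g m, dist (f x) L ≤ ε := by
  obtain ⟨m, hm, hosc⟩ := hf ε hε k hk g hg
  refine ⟨m, hm, fun x hx => le_of_tendsto (tendsto_const_nhds.dist hL) ?_⟩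
  filter_upwards [eventually_ge_atTop m] with j hmj
  exact (hosc x hx (g j) (hg.mem_cone_self hmj)).le

theorem ConeCauchy.exists_forall_dist_le_of_forall_dist_le (hf : ConeCauchy f) (hq : 1 ≤ q)
    (hg : IsQGRay q Q g) (hL : Tendsto (fun i => f (g i)) atTop (nhds L)) (hk : 0 < k) (hC : 0 ≤ C)
    (hε : 0 < ε) :
    ∃ m : ℕ, 1 ≤ m ∧ ∀ (h : ℕ → X) (i : ℕ), m < i → IsQGOn k K h (Set.Icc 1 i) →
      (∀ j, 1 ≤ j → j ≤ m → dist (h j) (g j) ≤ C) → dist (f (h i)) L ≤ ε := by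
  obtain ⟨M, hqM, hQM, hkM, hKM⟩ : ∃ M, q ≤ M ∧ Q ≤ M ∧ k ≤ M ∧ K ≤ M :=
    ⟨max (max q Q) (max k K), by simp, by simp, by simp, by simp⟩
  have hMC : M ≤ M + C := le_add_of_nonneg_right hC
  have hq_pos : 0 < q := one_pos.trans_le hq
  have hg' : IsQGRay (M + C) (M + C) g :=
    IsQGOn.mono_const hg hq_pos (hqM.trans hMC) (hQM.trans hMC)
  obtain ⟨m, hm, hcone⟩ :=
    hf.exists_forall_mem_cone_dist_le (hq.trans (hqM.trans hMC)) hg' hL hε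
  refine ⟨m, hm, fun h i hmi hh hclose => hcone (h i) ?_⟩
  exact ((hg.isQGOn_Icc m).mono_const hq_pos (hqM.trans hMC) hQM).mem_cone_of_forall_dist_le
    (hh.mono_const hk (hkM.trans hMC) hKM) hm hmi hC hclose

theorem ConeCauchy.exists_eventually_forall_dist_le (hf : ConeCauchy f) (hq : 1 ≤ q)
    (hg : IsQGRay q Q g) (hL : Tendsto (fun i => f (g i)) atTop (nhds L)) (hk : 0 < k)
    (happroach : BoundedlyApproaches l gs g) (hε : 0 < ε) :
    ∃ m : ℕ, ∀ᶠ n in l, ∀ i, m < i → IsQGOn k K (gs n) (Set.Icc 1 i) →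
      dist (f (gs n i)) L ≤ ε := by
  obtain ⟨C, hC, hclose⟩ := happroach
  obtain ⟨m, hm, hdist⟩ :=
    hf.exists_forall_dist_le_of_forall_dist_le (K := K) hq hg hL hk hC.le hε
  refine ⟨m, (hclose m hm).mono fun n hn i hmi hgs => ?_⟩
  exact hdist (gs n) i hmi hgs fun j hj hjm => (hn j hj hjm).le

theorem ConeCauchy.tendsto_limit_of_boundedlyApproaches (hf : ConeCauchy f) (hq : 1 ≤ q)
    (hg : IsQGRay q Q g) (hL : Tendsto (fun i => f (g i)) atTop (nhds L)) (hk : 0 < k)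
    (happroach : BoundedlyApproaches l gs g) (hgs : ∀ n, IsQGRay k K (gs n)) {Ls : ι → E}
    (hLs : ∀ n, Tendsto (fun i => f (gs n i)) atTop (nhds (Ls n))) :
    Tendsto Ls l (nhds L) := by
  refine Metric.nhds_basis_closedBall.tendsto_right_iff.mpr fun ε hε => ?_
  obtain ⟨m, hm⟩ := hf.exists_eventually_forall_dist_le (K := K) hq hg hL hk happroach hε
  filter_upwards [hm] with n hn
  refine le_of_tendsto ((hLs n).dist tendsto_const_nhds) ?_
  filter_upwards [eventually_gt_atTop m] with i hmi
  exact hn i hmi ((hgs n).isQGOn_Icc i)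

theorem ConeCauchy.tendsto_endpoint_of_boundedlyApproaches (hf : ConeCauchy f) (hq : 1 ≤ q)
    (hg : IsQGRay q Q g) (hL : Tendsto (fun i => f (g i)) atTop (nhds L)) (hk : 0 < k)
    (happroach : BoundedlyApproaches l gs g) {len : ι → ℕ}
    (hgs : ∀ n, IsQGOn k K (gs n) (Set.Icc 1 (len n))) (hlen : Tendsto len l atTop) :
    Tendsto (fun n => f (gs n (len n))) l (nhds L) := by
  refine Metric.nhds_basis_closedBall.tendsto_right_iff.mpr fun ε hε => ?_
  obtain ⟨m, hm⟩ := hf.exists_eventually_forall_dist_le (K := K) hq hg hL hk happroach hε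
  filter_upwards [hm, hlen.eventually_gt_atTop m] with n hn hmlen
  exact hn (len n) hmlen (hgs n)

end Limits

theorem stmt_6_general {X E ι : Type*} [MetricSpace X] [PseudoMetricSpace E] {f : X → E}
    (hf : ConeCauchy f) {k K : ℝ} (hk : 0 < k) {g : ℕ → X}
    (hg : ∃ q Q : ℝ, 1 ≤ q ∧ IsQGRay q Q g) {L : E}
    (hL : Tendsto (fun i => f (g i)) atTop (nhds L)) (l : Filter ι) :
    (∀ gs : ι → ℕ → X, (∀ n, IsQGRay k K (gs n)) → BoundedlyApproaches l gs g →
      ∀ Ls : ι → E, (∀ n, Tendsto (fun i => f (gs n i)) atTop (nhds (Ls n))) →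
      Tendsto Ls l (nhds L)) ∧
    (∀ (gs : ι → ℕ → X) (len : ι → ℕ), (∀ n, IsQGOn k K (gs n) (Set.Icc 1 (len n))) →
      Tendsto len l atTop → BoundedlyApproaches l gs g →
      Tendsto (fun n => f (gs n (len n))) l (nhds L)) := by
  obtain ⟨q, Q, hq, hg⟩ := hg
  exact ⟨fun gs hgs happroach Ls hLs =>
      hf.tendsto_limit_of_boundedlyApproaches hq hg hL hk happroach hgs hLs,
    fun gs len hgs hlen happroach =>
      hf.tendsto_endpoint_of_boundedlyApproaches hq hg hL hk happroach hgs hlen⟩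

/-- Proposition 3.7: if integral (k,k)-quasi-geodesic rays gₙ boundedly approach g, then
f(gₙ) → f(g) for every geometrically slowly-oscillating f; if instead the gₙ are finite
with endpoints yₙ, then f(yₙ) → f(g). -/
theorem stmt_6 {X : Type*} [MetricSpace X] (f : X → ℂ) (hf : GeomSO f)
    (k : ℝ) (hk : 1 ≤ k) (g : ℕ → X)
    (hg : ∃ q Q : ℝ, 1 ≤ q ∧ 0 ≤ Q ∧ IsQGRay q Q g)
    (Lg : ℂ) (hLg : Tendsto (fun i => f (g i)) atTop (nhds Lg)) :
    (∀ gs : ℕ → ℕ → X, (∀ n, IsQGRay k k (gs n)) →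
      (∃ C > (0 : ℝ), ∀ m, 1 ≤ m → ∃ N, ∀ n, N ≤ n → ∀ i, 1 ≤ i → i ≤ m →
        dist (gs n i) (g i) < C) →
      ∀ Ls : ℕ → ℂ, (∀ n, Tendsto (fun i => f (gs n i)) atTop (nhds (Ls n))) →
      Tendsto Ls atTop (nhds Lg)) ∧
    (∀ (gs : ℕ → ℕ → X) (len : ℕ → ℕ),
      (∀ n, IsQGOn k k (gs n) (Set.Icc 1 (len n))) →
      Tendsto len atTop atTop →
      (∃ C > (0 : ℝ), ∀ m, 1 ≤ m → ∃ N, ∀ n, N ≤ n → ∀ i, 1 ≤ i → i ≤ m →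
        dist (gs n i) (g i) < C) →
      Tendsto (fun n => f (gs n (len n))) atTop (nhds Lg)) := by
  obtain ⟨q, Q, hq, -, hg⟩ := hg
  simpa only [boundedlyApproaches_atTop] using
    stmt_6_general hf.coneCauchy (one_pos.trans_le hk) ⟨q, Q, hq, hg⟩ hLg (atTop : Filter ℕ)
end

section
/- Let X be a metric space, let Y be a closed subset of X, and let r > 0 be such that every point of X is within distance r of Y. If g : X → [0,1] is a continuous slowly-oscillating function whose restriction to Y (with the subspace metric) is geometrically slowly-oscillating, then g is geometrically slowly-oscillating on X. -/
open Filter Metric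

/-!
Send each point of `X` to a point of the isometrically embedded net `Z` at distance at most `r`.
This map changes distances by at most `2r`, so it carries `(k,k)`-quasi-geodesics to
`(k + 2r, k + 2r)`-quasi-geodesics and the cones of `X` into cones of `Z`, on which `f` has small
oscillation. Deep cones of `X` lie far from the base point, and there slow oscillation makes moving
a point by `r` change `f` by very little.
-/

section QuasiGeodesic

variable {X Z : Type*} [MetricSpace X] [MetricSpace Z] {q q' Q Q' c : ℝ} {γ : ℕ → X}

theorem IsQGOn.mono_s8 {s : Set ℕ} (hγ : IsQGOn q Q γ s) (hq : 0 < q) (hqq' : q ≤ q')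
    (hQQ' : Q ≤ Q') : IsQGOn q' Q' γ s := by
  intro i hi j hj
  obtain ⟨hlower, hupper⟩ := hγ i hi j hj
  constructor
  · calc |(i : ℝ) - j| / q' - Q' ≤ |(i : ℝ) - j| / q - Q := by gcongr
      _ ≤ dist (γ i) (γ j) := hlower
  · calc dist (γ i) (γ j) ≤ q * |(i : ℝ) - j| + Q := hupper
      _ ≤ q' * |(i : ℝ) - j| + Q' := by gcongr

theorem IsQGOn.comp_of_abs_dist_sub_dist_le {s : Set ℕ} {p : X → Z} (hγ : IsQGOn q Q γ s)
    (hp : ∀ x y, |dist (p x) (p y) - dist x y| ≤ c) : IsQGOn q (Q + c) (p ∘ γ) s := by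
  intro i hi j hj
  obtain ⟨hlower, hupper⟩ := hγ i hi j hj
  obtain ⟨hp_lower, hp_upper⟩ := abs_le.mp (hp (γ i) (γ j))
  simp only [Function.comp_apply]
  constructor <;> linarith

theorem cone_subset_cone {x₀ : X} {m m' : ℕ} (hq : 0 < q) (hqq' : q ≤ q') (hQQ' : Q ≤ Q')
    (hm : m' ≤ m) : Cone x₀ q Q γ m ⊆ Cone x₀ q' Q' γ m' := by
  rintro _ ⟨h, n, i, hh, h_one, h_eq, hmi, hin, rfl⟩
  exact ⟨h, n, i, hh.mono_s8 hq hqq' hQQ', h_one, fun j hj hjm => h_eq j hj (hjm.trans hm),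
    hm.trans hmi, hin, rfl⟩

theorem mapsTo_cone_of_abs_dist_sub_dist_le {p : X → Z}
    (hp : ∀ x y, |dist (p x) (p y) - dist x y| ≤ c) (x₀ : X) (q Q : ℝ) (γ : ℕ → X) (m : ℕ) :
    Set.MapsTo p (Cone x₀ q Q γ m) (Cone (p x₀) q (Q + c) (p ∘ γ) m) := by
  rintro _ ⟨h, n, i, hh, h_one, h_eq, hmi, hin, rfl⟩
  exact ⟨p ∘ h, n, i, hh.comp_of_abs_dist_sub_dist_le hp, congrArg p h_one,
    fun j hj hjm => congrArg p (h_eq j hj hjm), hmi, hin, rfl⟩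

theorem le_dist_of_mem_cone {x₀ x : X} {m : ℕ} (hq : 0 ≤ q) (hm : 1 ≤ m)
    (hx : x ∈ Cone x₀ q Q γ m) : ((m : ℝ) - 1) / q - Q ≤ dist x₀ x := by
  obtain ⟨h, n, i, hh, rfl, -, hmi, hin, rfl⟩ := hx
  have hi : 1 ≤ i := hm.trans hmi
  have index_le : (m : ℝ) - 1 ≤ |((1 : ℕ) : ℝ) - i| := by
    rw [abs_sub_comm, Nat.cast_one]
    exact (sub_le_sub_right (Nat.cast_le.mpr hmi) 1).trans (le_abs_self _)
  calc ((m : ℝ) - 1) / q - Q ≤ |((1 : ℕ) : ℝ) - i| / q - Q := by gcongr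
    _ ≤ dist (h 1) (h i) := (hh 1 ⟨le_rfl, hi.trans hin⟩ i ⟨hi, hin⟩).1

theorem exists_forall_mem_cone_le_dist (x₀ : X) (hq : 0 < q) (Q : ℝ) (γ : ℕ → X) (R : ℝ) :
    ∃ m : ℕ, ∀ x ∈ Cone x₀ q Q γ m, R ≤ dist x₀ x := by
  obtain ⟨n, hn⟩ := exists_nat_ge ((R + Q) * q)
  refine ⟨n + 1, fun x hx => ?_⟩
  have hdist := le_dist_of_mem_cone hq.le n.succ_pos hx
  rw [Nat.cast_succ, add_sub_cancel_right] at hdist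
  linarith [(le_div_iff₀ hq).mpr hn]

end QuasiGeodesic

theorem SlowlyOscillating.exists_forall_dist_lt {X E : Type*} [MetricSpace X]
    [PseudoMetricSpace E] {f : X → E} (hf : SlowlyOscillating f) (x₀ : X) (M : ℝ) {ε : ℝ}
    (hε : 0 < ε) : ∃ R : ℝ, ∀ x y, R ≤ dist x₀ x → dist x y ≤ M → dist (f x) (f y) < ε := by
  by_contra! hcontra
  choose x y hx hxy hfxy using fun n : ℕ => hcontra n
  have hx_tendsto : Tendsto (fun n => dist x₀ (x n)) atTop atTop :=
    tendsto_atTop_mono hx tendsto_natCast_atTop_atTop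
  have hxy_bounded : ∃ M' > (0 : ℝ), ∀ n, 1 ≤ n → dist (x n) (y n) < M' :=
    ⟨|M| + 1, by positivity, fun n _ => by linarith [hxy n, le_abs_self M]⟩
  obtain ⟨n, hn⟩ := ((hf x₀ x y hx_tendsto hxy_bounded).eventually_lt_const hε).exists
  exact (hfxy n).not_gt hn

theorem abs_dist_sub_dist_le_of_dist_isometry_le {X Z : Type*} [PseudoMetricSpace X]
    [PseudoMetricSpace Z] {ι : Z → X} (hι : Isometry ι) {p : X → Z} {r : ℝ}
    (hp : ∀ x, dist x (ι (p x)) ≤ r) (x y : X) : |dist (p x) (p y) - dist x y| ≤ 2 * r := by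
  rw [← hι.dist_eq, abs_sub_comm, ← Real.dist_eq]
  linarith [dist_dist_dist_le x y (ι (p x)) (ι (p y)), hp x, hp y]

theorem diam_le_of_subset_thickening {E : Type*} [PseudoMetricSpace E] {S T : Set E} {δ : ℝ}
    (hT : Bornology.IsBounded T) (hδ : 0 ≤ δ) (hST : S ⊆ thickening δ T) :
    diam S ≤ diam T + 2 * δ :=
  (diam_mono hST hT.thickening).trans (diam_thickening_le T hδ)

theorem stmt_8_general {X Z E : Type*} [MetricSpace X] [MetricSpace Z] [PseudoMetricSpace E]
    {ι : Z → X} (hι : Isometry ι) {r : ℝ} (hnet : ∀ x, ∃ z, dist x (ι z) ≤ r) {f : X → E}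
    (hbdd : Bornology.IsBounded (Set.range f)) (hc : Continuous f) (hso : SlowlyOscillating f)
    (hfι : GeomSO (f ∘ ι)) : GeomSO f := by
  refine ⟨hbdd, hc, hso, fun ε hε k hk x₀ γ hγ hγ_one => ?_⟩
  obtain ⟨hbddι, -, -, hcone⟩ := hfι
  choose p hp using hnet
  have hr : 0 ≤ r := dist_nonneg.trans (hp x₀)
  have hk_pos : 0 < k := by linarith
  have hkr : k ≤ k + 2 * r := by linarith
  have hε_third : 0 < ε / 3 := by positivity
  have hp_dist := abs_dist_sub_dist_le_of_dist_isometry_le hι hp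
  have hpγ : IsQGRay (k + 2 * r) (k + 2 * r) (p ∘ γ) :=
    (hγ.comp_of_abs_dist_sub_dist_le hp_dist).mono_s8 hk_pos hkr le_rfl
  obtain ⟨m, hm, hdiam⟩ :=
    hcone (ε / 3) hε_third (k + 2 * r) (hk.trans hkr) (p x₀) (p ∘ γ) hpγ (congrArg p hγ_one)
  obtain ⟨R, hR⟩ := hso.exists_forall_dist_lt x₀ r hε_third
  obtain ⟨N, hN⟩ := exists_forall_mem_cone_le_dist x₀ hk_pos k γ R
  refine ⟨max m N, le_max_of_le_left hm, ?_⟩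
  have himage : f '' Cone x₀ k k γ (max m N) ⊆
      thickening (ε / 3) (f ∘ ι '' Cone (p x₀) (k + 2 * r) (k + 2 * r) (p ∘ γ) m) := by
    rintro _ ⟨x, hx, rfl⟩
    have hpx : p x ∈ Cone (p x₀) (k + 2 * r) (k + 2 * r) (p ∘ γ) m :=
      cone_subset_cone hk_pos hkr le_rfl (le_max_left m N)
        (mapsTo_cone_of_abs_dist_sub_dist_le hp_dist x₀ k k γ _ hx)
    have hx_far : R ≤ dist x₀ x :=
      hN x (cone_subset_cone hk_pos le_rfl le_rfl (le_max_right m N) hx)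
    exact mem_thickening_iff.mpr ⟨_, Set.mem_image_of_mem _ hpx, hR x _ hx_far (hp x)⟩
  have hle := diam_le_of_subset_thickening (hbddι.subset (Set.image_subset_range _ _))
    hε_third.le himage
  linarith

/-- Lemma 4.2 (main step): if Y is a closed coarsely dense subset of X and g : X → [0,1]
is continuous, slowly-oscillating, and geometrically slowly-oscillating on Y, then g is
geometrically slowly-oscillating on X. -/
theorem stmt_8 {X : Type*} [MetricSpace X] (Y : Set X) (hY : IsClosed Y)
    (r : ℝ) (hr : 0 < r) (hnet : ∀ x : X, ∃ y ∈ Y, dist x y ≤ r)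
    (g : X → ℝ) (hrange : ∀ x, g x ∈ Set.Icc (0 : ℝ) 1)
    (hc : Continuous g) (hso : SlowlyOscillating g)
    (hres : GeomSO (fun y : Y => g y)) :
    GeomSO g :=
  stmt_8_general isometry_subtype_coe (by simpa using hnet)
    ((isBounded_Icc 0 1).subset (Set.range_subset_iff.mpr hrange)) hc hso hres
end

section
/- Let X be a metric space and let g and h be integral quasi-geodesic rays in X whose images are at finite Hausdorff distance from each other. Then for every geometrically slowly-oscillating function f : X → ℂ one has lim_{i→∞} f(g(i)) = lim_{i→∞} f(h(i)); that is, g and h converge to the same point of the quasi-geodesic boundary. -/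
open Filter Metric

/-!
A quasi-geodesic ray `g` leaves every bounded set. If every `g i` is at distance less than `M` from
some `h (j i)`, then `h ∘ j` leaves every bounded set as well. Since `h` maps finite sets to bounded
ones, this forces `j i → ∞`, so `f (h (j i)) → Lh`; slow oscillation identifies this limit with
`Lg`.
-/

open Bornology (IsBounded cobounded isBounded_compl_iff isBounded_def)

theorem exists_subset_thickening_of_hausdorffEDist_ne_top {X : Type*} [PseudoMetricSpace X]
    {s t : Set X} (hst : hausdorffEDist s t ≠ ⊤) : ∃ δ, s ⊆ thickening δ t :=
  ⟨hausdorffDist s t + 1, fun _ hx ↦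
    mem_thickening_iff.2 (exists_dist_lt_of_hausdorffDist_lt hx (lt_add_one _) hst)⟩

theorem tendsto_cobounded_of_eventually_dist_lt {X ι : Type*} [PseudoMetricSpace X]
    {l : Filter ι} {x y : ι → X} {M : ℝ} (hx : Tendsto x l (cobounded X))
    (hxy : ∀ᶠ i in l, dist (x i) (y i) < M) : Tendsto y l (cobounded X) := by
  refine fun s hs ↦ mem_map.2 ?_
  have hbounded : IsBounded (thickening M sᶜ) := (isBounded_compl_iff.2 hs).thickening
  filter_upwards [hx (isBounded_def.1 hbounded), hxy] with i hxi hxyi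
  by_contra hyi
  exact hxi (mem_thickening_iff.2 ⟨y i, hyi, hxyi⟩)

theorem tendsto_cofinite_of_comp_tendsto_cobounded {X ι κ : Type*} [Bornology X] {l : Filter ι}
    {h : κ → X} {j : ι → κ} (hhj : Tendsto (h ∘ j) l (cobounded X)) : Tendsto j l cofinite := by
  refine fun s hs ↦ mem_map.2 ?_
  have hbounded : IsBounded (h '' sᶜ) := (Set.Finite.image h hs).isBounded
  filter_upwards [hhj (isBounded_def.1 hbounded)] with i hi
  by_contra hji
  exact hi (Set.mem_image_of_mem h hji)

theorem IsQGRay.tendsto_cobounded {X : Type*} [MetricSpace X] {q Q : ℝ} {g : ℕ → X}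
    (hg : IsQGRay q Q g) (hq : 0 < q) : Tendsto g atTop (cobounded X) := by
  rw [← tendsto_dist_right_atTop_iff (g 1)]
  have hlinear : Tendsto (fun i : ℕ ↦ ((i : ℝ) - 1) / q - Q) atTop atTop :=
    tendsto_atTop_add_const_right _ _
      ((tendsto_atTop_add_const_right _ _ tendsto_natCast_atTop_atTop).atTop_div_const hq)
  refine tendsto_atTop_mono' atTop ?_ hlinear
  filter_upwards [eventually_ge_atTop 1] with i hi
  calc ((i : ℝ) - 1) / q - Q ≤ |(i : ℝ) - (1 : ℕ)| / q - Q := by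
        gcongr
        simpa using le_abs_self ((i : ℝ) - 1)
    _ ≤ dist (g i) (g 1) := (hg i hi 1 Set.self_mem_Ici).1

theorem SlowlyOscillating.tendsto_dist_of_eventually_dist_lt {X E : Type*} [MetricSpace X]
    [PseudoMetricSpace E] {f : X → E} (hf : SlowlyOscillating f) {x y : ℕ → X} {M : ℝ}
    (hx : Tendsto x atTop (cobounded X)) (hxy : ∀ᶠ n in atTop, dist (x n) (y n) < M) :
    Tendsto (fun n ↦ dist (f (x n)) (f (y n))) atTop (nhds 0) := by
  obtain ⟨N, hN⟩ := eventually_atTop.1 hxy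
  have hM : 0 < M := dist_nonneg.trans_lt (hN N le_rfl)
  have hxN : Tendsto (fun n ↦ dist (x 0) (x (n + N))) atTop atTop :=
    (tendsto_dist_left_cobounded_atTop (x 0)).comp (hx.comp (tendsto_add_atTop_nat N))
  exact (tendsto_add_atTop_iff_nat N).1 <|
    hf (x 0) (fun n ↦ x (n + N)) (fun n ↦ y (n + N)) hxN
      ⟨M, hM, fun n _ ↦ hN (n + N) (Nat.le_add_left N n)⟩

theorem stmt_11_general {X E : Type*} [MetricSpace X] [MetricSpace E] {g h : ℕ → X} {M : ℝ}
    (hg : Tendsto g atTop (cobounded X))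
    (hgh : ∀ᶠ i in atTop, g i ∈ thickening M (Set.range h))
    {f : X → E} (hf : SlowlyOscillating f) {Lg Lh : E}
    (hLg : Tendsto (fun i ↦ f (g i)) atTop (nhds Lg))
    (hLh : Tendsto (fun i ↦ f (h i)) atTop (nhds Lh)) :
    Lg = Lh := by
  simp only [mem_thickening_iff, Set.exists_range_iff] at hgh
  obtain ⟨j, hj⟩ := hgh.choice
  have hhj : Tendsto (h ∘ j) atTop (cobounded X) := tendsto_cobounded_of_eventually_dist_lt hg hj
  have hj_atTop : Tendsto j atTop atTop :=
    (tendsto_cofinite_of_comp_tendsto_cobounded hhj).mono_right Nat.cofinite_eq_atTop.le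
  have hdist : Tendsto (fun i ↦ dist (f (g i)) (f (h (j i)))) atTop (nhds 0) :=
    hf.tendsto_dist_of_eventually_dist_lt hg hj
  exact dist_eq_zero.1 (tendsto_nhds_unique (hLg.dist (hLh.comp hj_atTop)) hdist)

/-- Corollary 4.9: integral quasi-geodesic rays at finite Hausdorff distance converge to
the same point of the quasi-geodesic boundary. -/
theorem stmt_11 {X : Type*} [MetricSpace X] (g h : ℕ → X)
    (hg : ∃ q Q : ℝ, 1 ≤ q ∧ 0 ≤ Q ∧ IsQGRay q Q g)
    (hh : ∃ q Q : ℝ, 1 ≤ q ∧ 0 ≤ Q ∧ IsQGRay q Q h)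
    (hd : EMetric.hausdorffEdist (g '' {i | 1 ≤ i}) (h '' {i | 1 ≤ i}) ≠ ⊤)
    (f : X → ℂ) (hf : GeomSO f) (Lg Lh : ℂ)
    (hLg : Tendsto (fun i => f (g i)) atTop (nhds Lg))
    (hLh : Tendsto (fun i => f (h i)) atTop (nhds Lh)) :
    Lg = Lh := by
  obtain ⟨q, Q, hq, -, hg⟩ := hg
  obtain ⟨-, -, hf_slow, -⟩ := hf
  obtain ⟨M, hM⟩ := exists_subset_thickening_of_hausdorffEDist_ne_top hd
  have hgh : ∀ᶠ i in atTop, g i ∈ thickening M (Set.range h) :=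
    (eventually_ge_atTop 1).mono fun i hi ↦
      thickening_subset_of_subset M (Set.image_subset_range h _) (hM (Set.mem_image_of_mem g hi))
  exact stmt_11_general (hg.tendsto_cobounded (zero_lt_one.trans_le hq)) hgh hf_slow hLg hLh
end

section
/- Let X be a proper geodesic δ-hyperbolic metric space, let p ∈ X, and let f : X → ℝ be a bounded continuous geometrically slowly-oscillating function. If (xᵢ) is a sequence in X converging to a point of the Gromov boundary, i.e., lim_{i→∞, j→∞} ⟨xᵢ, xⱼ⟩_p = ∞, then the sequence (f(xᵢ)) converges. -/
open Filter Metric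

/-!
Join `p` to every point `y` by a geodesic `γ y`. If `⟨y, z⟩_p ≥ t`, hyperbolicity keeps `γ y t`
and `γ z t` within `δ` of each other. Pick points `c n` going to the boundary point so fast that
`⟨c a, c b⟩_p ≥ a` for `a ≤ b`. The diagonal `n ↦ γ (c n) n` is then a geodesic ray up to the
additive error `δ`, and a point `y` close to the boundary point fellow-travels it for a long time:
following the diagonal up to time `m` and then jumping to `γ y` reaches `y` with additive error
`δ + 1`, the extra `1` coming from integer parametrization. So `y` lies in the `m`-cone of the
diagonal, and `f` oscillates little on that cone.
-/

section GromovProduct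

variable {X : Type*} [MetricSpace X] {p : X} {δ : ℝ}

theorem gromovProd_le_dist_right (p u v : X) : gromovProd p u v ≤ dist p v := by
  unfold gromovProd
  linarith [dist_triangle u v p, dist_comm v p]

theorem gromovProd_comm (p u v : X) : gromovProd p u v = gromovProd p v u := by
  rw [gromovProd, gromovProd, dist_comm u v, add_comm (dist u p)]

/-- The four-point condition of `δ`-hyperbolicity with the base point of the Gromov products fixed
at `p`. The constant is scaled as in the definition of a `δ`-hyperbolic space, so that geodesics
issuing from `p` stay `δ`-close. -/
def IsHyperbolicAt (p : X) (δ : ℝ) : Prop :=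
  ∀ x y z : X, min (gromovProd p x z) (gromovProd p z y) - δ / 4 ≤ gromovProd p x y

theorem IsHyperbolicAt.nonneg (hp : IsHyperbolicAt p δ) : 0 ≤ δ := by
  have hppp := hp p p p
  rw [min_self] at hppp
  linarith

end GromovProduct

section GeodesicSegment

variable {X : Type*} [MetricSpace X] {p u v : X} {δ t : ℝ} {γ η : ℝ → X}

/-- `γ` restricts to a unit-speed geodesic from `u` to `v`, parametrized by `[0, dist u v]`; its
values outside this interval are arbitrary. -/
structure IsGeodesicSegment (γ : ℝ → X) (u v : X) : Prop where
  source : γ 0 = u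
  target : γ (dist u v) = v
  dist_eq : ∀ s ∈ Set.Icc 0 (dist u v), ∀ t ∈ Set.Icc 0 (dist u v), dist (γ s) (γ t) = |s - t|

theorem IsGeodesicSpace.exists_isGeodesicSegment (hX : IsGeodesicSpace X) (u v : X) :
    ∃ γ, IsGeodesicSegment γ u v :=
  let ⟨γ, source, target, dist_eq⟩ := hX u v
  ⟨γ, source, target, dist_eq⟩

namespace IsGeodesicSegment

theorem dist_source (hγ : IsGeodesicSegment γ u v) (ht : t ∈ Set.Icc 0 (dist u v)) :
    dist (γ t) u = t := by
  have h := hγ.dist_eq t ht 0 ⟨le_rfl, dist_nonneg⟩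
  rwa [hγ.source, sub_zero, abs_of_nonneg ht.1] at h

theorem dist_target (hγ : IsGeodesicSegment γ u v) (ht : t ∈ Set.Icc 0 (dist u v)) :
    dist (γ t) v = dist u v - t := by
  have h := hγ.dist_eq t ht (dist u v) ⟨dist_nonneg, le_rfl⟩
  rwa [hγ.target, abs_sub_comm, abs_of_nonneg (sub_nonneg.2 ht.2)] at h

theorem gromovProd_target (hγ : IsGeodesicSegment γ u v) (ht : t ∈ Set.Icc 0 (dist u v)) :
    gromovProd u (γ t) v = t := by
  rw [gromovProd, hγ.dist_source ht, hγ.dist_target ht, dist_comm v u]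
  ring

theorem dist_le_of_le_gromovProd (hp : IsHyperbolicAt p δ) (hγ : IsGeodesicSegment γ p u)
    (hη : IsGeodesicSegment η p v) (ht₀ : 0 ≤ t) (ht : t ≤ gromovProd p u v) :
    dist (γ t) (η t) ≤ δ := by
  have htu : t ∈ Set.Icc 0 (dist p u) :=
    ⟨ht₀, ht.trans (gromovProd_comm p u v ▸ gromovProd_le_dist_right p v u)⟩
  have htv : t ∈ Set.Icc 0 (dist p v) := ⟨ht₀, ht.trans (gromovProd_le_dist_right p u v)⟩
  have hγu : gromovProd p (γ t) u = t := hγ.gromovProd_target htu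
  have hvη : gromovProd p v (η t) = t := gromovProd_comm p v (η t) ▸ hη.gromovProd_target htv
  have huη : t - δ / 4 ≤ gromovProd p u (η t) := by
    simpa only [hvη, min_eq_right ht] using hp u (η t) v
  have hγη : t - δ / 4 - δ / 4 ≤ gromovProd p (γ t) (η t) :=
    calc t - δ / 4 - δ / 4 ≤ min (gromovProd p (γ t) u) (gromovProd p u (η t)) - δ / 4 := by
          gcongr
          exact le_min (by linarith [hp.nonneg]) huη
      _ ≤ gromovProd p (γ t) (η t) := hp (γ t) (η t) u
  rw [gromovProd, hγ.dist_source htu, hη.dist_source htv] at hγη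
  linarith

end IsGeodesicSegment

end GeodesicSegment

section RoughGeodesic

variable {X : Type*} [MetricSpace X] {p y : X} {δ k D K L : ℝ} {g c : ℕ → X} {s t : Set ℕ} {m : ℕ}
  {γ : ℝ → X}

/-- `g` is a geodesic on the index set `s` up to the additive error `K`. Such maps are indexed from
`0`, so that `g n` is at time `n`, and turned into integral quasi-geodesics, which are indexed from
`1`, by the shift `fun j ↦ g (j - 1)`. -/
def IsRoughGeodesicOn (K : ℝ) (g : ℕ → X) (s : Set ℕ) : Prop :=
  ∀ a ∈ s, ∀ b ∈ s, |dist (g a) (g b) - (|(a : ℝ) - b|)| ≤ K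

namespace IsRoughGeodesicOn

theorem of_le (h : ∀ a ∈ s, ∀ b ∈ s, a ≤ b → |dist (g a) (g b) - ((b : ℝ) - a)| ≤ K) :
    IsRoughGeodesicOn K g s := by
  have key (a) (ha : a ∈ s) (b) (hb : b ∈ s) (hab : a ≤ b) :
      |dist (g a) (g b) - (|(a : ℝ) - b|)| ≤ K := by
    rw [abs_sub_comm (a : ℝ), abs_of_nonneg (sub_nonneg.2 (Nat.cast_le.2 hab))]
    exact h a ha b hb hab
  intro a ha b hb
  rcases le_total a b with hab | hba
  · exact key a ha b hb hab
  · rw [dist_comm, abs_sub_comm (a : ℝ)]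
    exact key b hb a ha hba

theorem nonneg (hg : IsRoughGeodesicOn K g s) {a : ℕ} (ha : a ∈ s) : 0 ≤ K :=
  (abs_nonneg _).trans (hg a ha a ha)

theorem mono (hg : IsRoughGeodesicOn K g s) (hKL : K ≤ L) (hts : t ⊆ s) :
    IsRoughGeodesicOn L g t :=
  fun a ha b hb ↦ (hg a (hts ha) b (hts hb)).trans hKL

theorem isQGOn_pred (hg : IsRoughGeodesicOn k g s) (hk : 1 ≤ k)
    (hts : ∀ j ∈ t, 1 ≤ j ∧ j - 1 ∈ s) : IsQGOn k k (fun j ↦ g (j - 1)) t := by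
  intro a ha b hb
  obtain ⟨ha₁, has⟩ := hts a ha
  obtain ⟨hb₁, hbs⟩ := hts b hb
  have h := abs_le.1 (hg (a - 1) has (b - 1) hbs)
  rw [Nat.cast_pred ha₁, Nat.cast_pred hb₁, sub_sub_sub_cancel_right] at h
  have hdiv : |(a : ℝ) - b| / k ≤ |(a : ℝ) - b| := div_le_self (abs_nonneg _) hk
  have hmul : |(a : ℝ) - b| ≤ k * |(a : ℝ) - b| := le_mul_of_one_le_left (abs_nonneg _) hk
  constructor <;> linarith

theorem splice (hg : IsRoughGeodesicOn D g s) (hc : IsRoughGeodesicOn L c s)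
    (hgc : ∀ a ∈ s, a < m → dist (g a) (c a) ≤ D) :
    IsRoughGeodesicOn (D + L) (fun n ↦ if n < m then g n else c n) s := by
  refine of_le fun a ha b hb hab ↦ ?_
  have hab' : |(a : ℝ) - b| = b - a := by
    rw [abs_sub_comm, abs_of_nonneg (sub_nonneg.2 (Nat.cast_le.2 hab))]
  have hgab := hg a ha b hb
  have hcab := hc a ha b hb
  rw [hab'] at hgab hcab
  by_cases hbm : b < m
  · simp only [hab.trans_lt hbm, hbm, if_true]
    linarith [hc.nonneg ha]
  by_cases ham : a < m
  · simp only [ham, hbm, if_true, if_false]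
    calc |dist (g a) (c b) - ((b : ℝ) - a)|
        ≤ |dist (g a) (c b) - dist (c a) (c b)| + |dist (c a) (c b) - ((b : ℝ) - a)| :=
          abs_sub_le _ _ _
      _ ≤ D + L := add_le_add ((abs_dist_sub_le _ _ _).trans (hgc a ha ham)) hcab
  · simp only [ham, hbm, if_false]
    linarith [hg.nonneg ha]

end IsRoughGeodesicOn

theorem IsGeodesicSegment.isRoughGeodesicOn_truncated (hγ : IsGeodesicSegment γ p y) :
    IsRoughGeodesicOn 1 (fun n : ℕ ↦ γ (min n (dist p y))) (Set.Iic ⌈dist p y⌉₊) := by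
  refine IsRoughGeodesicOn.of_le fun a ha b hb hab ↦ ?_
  have min_mem (n : ℕ) : min (n : ℝ) (dist p y) ∈ Set.Icc 0 (dist p y) :=
    ⟨le_min n.cast_nonneg dist_nonneg, min_le_right _ _⟩
  have sub_one_le_min {n : ℕ} (hn : n ∈ Set.Iic ⌈dist p y⌉₊) :
      (n : ℝ) - 1 ≤ min (n : ℝ) (dist p y) := by
    have hceil := Nat.ceil_lt_add_one (dist_nonneg : 0 ≤ dist p y)
    have hn' : (n : ℝ) ≤ ⌈dist p y⌉₊ := Nat.cast_le.2 hn
    exact le_min (by linarith) (by linarith)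
  have hmono : min (a : ℝ) (dist p y) ≤ min (b : ℝ) (dist p y) :=
    min_le_min_right _ (Nat.cast_le.2 hab)
  rw [hγ.dist_eq _ (min_mem a) _ (min_mem b), abs_sub_comm (min (a : ℝ) _),
    abs_of_nonneg (sub_nonneg.2 hmono), abs_le]
  constructor <;>
    linarith [sub_one_le_min ha, sub_one_le_min hb, min_le_left (a : ℝ) (dist p y),
      min_le_left (b : ℝ) (dist p y)]

theorem mem_cone_of_dist_le (hg : IsRoughGeodesicOn δ g Set.univ) (hg₀ : g 0 = p)
    (hγ : IsGeodesicSegment γ p y) (hm : m ≤ dist p y)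
    (hgγ : ∀ a < m, dist (g a) (γ a) ≤ δ) :
    y ∈ Cone p (δ + 1) (δ + 1) (fun j ↦ g (j - 1)) m := by
  have hδ : 0 ≤ δ := hg.nonneg (Set.mem_univ 0)
  have hmN : m ≤ ⌈dist p y⌉₊ := by exact_mod_cast hm.trans (Nat.le_ceil _)
  have hclose (a) (ha : a < m) : dist (g a) (γ (min a (dist p y))) ≤ δ := by
    rw [min_eq_left ((Nat.cast_le.2 ha.le).trans hm)]
    exact hgγ a ha
  have hsplice := (hg.mono le_rfl (Set.subset_univ _)).splice hγ.isRoughGeodesicOn_truncated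
    fun a _ ↦ hclose a
  refine ⟨_, ⌈dist p y⌉₊ + 1, ⌈dist p y⌉₊ + 1, hsplice.isQGOn_pred (by linarith) ?_, ?_, ?_,
    by lia, le_rfl, ?_⟩
  · rintro j ⟨hj₁, hjN⟩
    exact ⟨hj₁, Nat.sub_le_iff_le_add.2 hjN⟩
  · simp [hg₀, hγ.source]
  · intro j hj₁ hjm
    exact if_pos (by lia)
  · simp only [Nat.add_sub_cancel, hmN.not_gt, if_false]
    rw [min_eq_right (Nat.le_ceil _), hγ.target]

end RoughGeodesic

section BoundaryConvergence

variable {X : Type*} [MetricSpace X] {p : X} {δ : ℝ} {γ : X → ℝ → X} {c : ℕ → X} {F : Filter X}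

theorem exists_seq_le_gromovProd [F.NeBot]
    (hF : Tendsto (fun yz : X × X ↦ gromovProd p yz.1 yz.2) (F ×ˢ F) atTop) :
    ∃ c : ℕ → X, (∀ a b, a ≤ b → a ≤ gromovProd p (c a) (c b)) ∧
      ∀ m : ℕ, ∀ᶠ y in F, ∀ a ≤ m, a ≤ gromovProd p (c a) y := by
  have hlarge (n : ℕ) : ∃ T ∈ F, ∀ y ∈ T, ∀ z ∈ T, n ≤ gromovProd p y z := by
    obtain ⟨T, hTF, hT⟩ := mem_prod_self_iff.1 (hF.eventually_ge_atTop (n : ℝ))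
    exact ⟨T, hTF, fun y hy z hz ↦ hT (Set.mk_mem_prod hy hz)⟩
  choose T hTF hT using hlarge
  have hinter (m : ℕ) : ∀ᶠ y in F, ∀ a ≤ m, y ∈ T a :=
    (eventually_all_finite (Set.finite_Iic m)).2 fun a _ ↦ hTF a
  choose c hc using fun m ↦ (hinter m).exists
  refine ⟨c, fun a b hab ↦ hT a _ (hc a a le_rfl) _ (hc b a hab), fun m ↦ ?_⟩
  filter_upwards [hinter m] with y hy a ham
  exact hT a _ (hc a a le_rfl) y (hy a ham)

theorem isRoughGeodesicOn_diagonal (hp : IsHyperbolicAt p δ)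
    (hγ : ∀ y, IsGeodesicSegment (γ y) p y)
    (hc : ∀ a b, a ≤ b → a ≤ gromovProd p (c a) (c b)) :
    IsRoughGeodesicOn δ (fun n ↦ γ (c n) n) Set.univ := by
  refine IsRoughGeodesicOn.of_le fun a _ b _ hab ↦ ?_
  have hab' : (a : ℝ) ≤ b := Nat.cast_le.2 hab
  have hb : (b : ℝ) ≤ dist p (c b) := (hc b b le_rfl).trans (gromovProd_le_dist_right _ _ _)
  have hdist : dist (γ (c b) a) (γ (c b) b) = b - a := by
    rw [(hγ (c b)).dist_eq _ ⟨a.cast_nonneg, hab'.trans hb⟩ _ ⟨b.cast_nonneg, hb⟩, abs_sub_comm,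
      abs_of_nonneg (sub_nonneg.2 hab')]
  rw [← hdist]
  exact (abs_dist_sub_le _ _ _).trans
    ((hγ (c a)).dist_le_of_le_gromovProd hp (hγ (c b)) a.cast_nonneg (hc a b hab))

theorem exists_isQGRay_eventually_mem_cone [F.NeBot] (hgeo : ∀ y, ∃ γ, IsGeodesicSegment γ p y)
    (hp : IsHyperbolicAt p δ)
    (hF : Tendsto (fun yz : X × X ↦ gromovProd p yz.1 yz.2) (F ×ˢ F) atTop) :
    ∃ g : ℕ → X, IsQGRay (δ + 1) (δ + 1) g ∧ g 1 = p ∧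
      ∀ m, ∀ᶠ y in F, y ∈ Cone p (δ + 1) (δ + 1) g m := by
  choose γ hγ using hgeo
  obtain ⟨c, hcc, hcF⟩ := exists_seq_le_gromovProd hF
  have hdiag := isRoughGeodesicOn_diagonal hp hγ hcc
  have hdiag₀ : γ (c 0) (0 : ℕ) = p := by rw [Nat.cast_zero, (hγ (c 0)).source]
  refine ⟨fun j ↦ γ (c (j - 1)) (j - 1 : ℕ), ?_, hdiag₀, fun m ↦ ?_⟩
  · exact (hdiag.mono (by linarith) subset_rfl).isQGOn_pred (by linarith [hp.nonneg])
      fun j hj ↦ ⟨hj, Set.mem_univ _⟩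
  · filter_upwards [hcF m] with y hy
    exact mem_cone_of_dist_le hdiag hdiag₀ (hγ y)
      ((hy m le_rfl).trans (gromovProd_le_dist_right _ _ _)) fun a ham ↦
        (hγ (c a)).dist_le_of_le_gromovProd hp (hγ y) a.cast_nonneg (hy a ham.le)

end BoundaryConvergence

/-- The cone condition of geometric slow oscillation for one base point `p` and one quasi-geodesic
constant `k`: the oscillation of `f` on the `m`-cones of each `(k, k)`-quasi-geodesic ray at `p`
becomes arbitrarily small. -/
def ConeOscillationVanishesAt {X E : Type*} [MetricSpace X] [PseudoMetricSpace E] (f : X → E)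
    (p : X) (k : ℝ) : Prop :=
  ∀ ε > (0 : ℝ), ∀ g : ℕ → X, IsQGRay k k g → g 1 = p →
    ∃ m : ℕ, 1 ≤ m ∧ Metric.diam (f '' Cone p k k g m) < ε

theorem GeomSO.coneOscillationVanishesAt {X E : Type*} [MetricSpace X] [PseudoMetricSpace E]
    {f : X → E} (hf : GeomSO f) (p : X) {k : ℝ} (hk : 1 ≤ k) : ConeOscillationVanishesAt f p k :=
  fun ε hε ↦ hf.2.2.2 ε hε k hk p

theorem stmt_15_general {X E : Type*} [MetricSpace X] [PseudoMetricSpace E] [CompleteSpace E]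
    {p : X} {δ : ℝ} (hgeo : ∀ y, ∃ γ, IsGeodesicSegment γ p y) (hp : IsHyperbolicAt p δ)
    {f : X → E} (hbdd : Bornology.IsBounded (Set.range f))
    (hcone : ConeOscillationVanishesAt f p (δ + 1)) {F : Filter X} [F.NeBot]
    (hF : Tendsto (fun yz : X × X ↦ gromovProd p yz.1 yz.2) (F ×ˢ F) atTop) :
    ∃ L : E, Tendsto f F (nhds L) := by
  obtain ⟨g, hg, hg₁, hgF⟩ := exists_isQGRay_eventually_mem_cone hgeo hp hF
  refine CompleteSpace.complete (Metric.cauchy_iff.2 ⟨inferInstance, fun ε hε ↦ ?_⟩)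
  obtain ⟨m, -, hdiam⟩ := hcone ε hε g hg hg₁
  refine ⟨_, image_mem_map (hgF m), fun y hy z hz ↦ ?_⟩
  exact (dist_le_diam_of_mem (hbdd.subset (Set.image_subset_range _ _)) hy hz).trans_lt hdiam

/-- Proposition 4.14 (one direction): on a proper geodesic δ-hyperbolic space, a bounded
continuous geometrically slowly-oscillating function converges along every sequence
converging to a point of the Gromov boundary. -/
theorem stmt_15 {X : Type*} [MetricSpace X] [ProperSpace X]
    (hgeo : IsGeodesicSpace X) (δ : ℝ)
    (hhyp : ∀ x y z a : X,
      gromovProd a x y ≥ min (gromovProd a x z) (gromovProd a z y) - δ / 4)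
    (p : X) (f : X → ℝ) (hf : GeomSO f)
    (x : ℕ → X)
    (hx : Tendsto (fun ij : ℕ × ℕ => gromovProd p (x ij.1) (x ij.2)) atTop atTop) :
    ∃ L : ℝ, Tendsto (fun i => f (x i)) atTop (nhds L) := by
  have hp : IsHyperbolicAt p δ := fun u v w ↦ hhyp u v w p
  refine stmt_15_general (hgeo.exists_isGeodesicSegment p) hp hf.1
    (hf.coneOscillationVanishesAt p (by linarith [hp.nonneg])) (F := map x atTop) ?_
  rwa [prod_map_map_eq, prod_atTop_atTop_eq, tendsto_map'_iff]
end
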